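/- Let (X, p_X) be a binary memoryless source, β ∈ (0, 1/2), N = 2^n, δ_N = 2^{−N^β}, G_N the n-fold Kronecker power of [[1,0],[1,1]] over F₂, A^N = X^N G_N, and V_X = {i : H(A_i | A^{i−1}) > 1 − δ_N}. Then the subvector A^N[V_X] is nearly uniform: log 2^{|V_X|} − H(A^N[V_X]) ≤ N δ_N, i.e., the Kullback–Leibler divergence between the distribution of A^N[V_X] and the uniform distribution on {0,1}^{|V_X|} is at most N δ_N. -/

import Mathlib

open Finset Filter Real

attribute [local instance] Classical.propDecidable

noncomputable section

/-- `p` is a probability mass function on the finite type `α`. -/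
def IsPMF {α : Type*} [Fintype α] (p : α → ℝ) : Prop :=
  (∀ a, 0 ≤ p a) ∧ ∑ a, p a = 1

/-- i.i.d. (product) distribution of `n` copies of a source with pmf `p`. -/
def iid {α : Type*} [Fintype α] (p : α → ℝ) (n : ℕ) : (Fin n → α) → ℝ :=
  fun x => ∏ i, p (x i)

/-- variational distance between two pmfs -/
def VD {α : Type*} [Fintype α] (p q : α → ℝ) : ℝ := ∑ a, |p a - q a|

/-- Shannon entropy, base 2 -/
def Hsh {α : Type*} [Fintype α] (p : α → ℝ) : ℝ := - ∑ a, p a * Real.logb 2 (p a)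

/-- Rényi entropy of order 2, base 2 -/
def H2 {α : Type*} [Fintype α] (p : α → ℝ) : ℝ := - Real.logb 2 (∑ a, (p a) ^ 2)

/-- min-entropy, base 2 -/
def Hinf {α : Type*} [Fintype α] (p : α → ℝ) : ℝ := - Real.logb 2 (⨆ a, p a)

/-- Kullback–Leibler divergence, base 2 -/
def KL {α : Type*} [Fintype α] (p q : α → ℝ) : ℝ := ∑ a, p a * Real.logb 2 (p a / q a)

/-- pushforward of a pmf along a map -/
def push {α β : Type*} [Fintype α] [Fintype β] (p : α → ℝ) (f : α → β) : β → ℝ :=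
  fun b => ∑ a, if f a = b then p a else 0

/-- conditional mutual information `I(X;Y|Q)` of a joint pmf on `Q × X × Y`, base 2:
`I(X;Y|Q) = H(Q,X) + H(Q,Y) - H(Q) - H(Q,X,Y)`. -/
def condMI {Q X Y : Type*} [Fintype Q] [Fintype X] [Fintype Y] (p : Q × X × Y → ℝ) : ℝ :=
  Hsh (fun qx : Q × X => ∑ y, p (qx.1, qx.2, y))
    + Hsh (fun qy : Q × Y => ∑ x, p (qy.1, x, qy.2))
    - Hsh (fun q : Q => ∑ x, ∑ y, p (q, x, y))
    - Hsh p

/-- the set of `ε`-letter-typical sequences of length `n` -/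
def typ {α : Type*} [Fintype α] (p : α → ℝ) (n : ℕ) (ε : ℝ) : Finset (Fin n → α) :=
  Finset.univ.filter fun x =>
    ∀ a, |((Finset.univ.filter fun i => x i = a).card : ℝ) / n - p a| ≤ ε * p a

/-- cumulative distribution function of the standard normal distribution -/
def stdΦ (x : ℝ) : ℝ := ∫ t in Set.Iic x, Real.exp (-(t ^ 2) / 2) / Real.sqrt (2 * Real.pi)

/-- `⌈2^r⌉₊`, the size of a message set `{1,…,2^r}` -/
def e2 (r : ℝ) : ℕ := ⌈(2:ℝ) ^ r⌉₊


/-- the polar transform `G_N = [[1,0],[1,1]]^{⊗n}` over `F₂`, `N = 2^n` -/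
def polarG : (n : ℕ) → Matrix (Fin (2 ^ n)) (Fin (2 ^ n)) (ZMod 2)
  | 0 => 1
  | n + 1 =>
    Matrix.reindex (finProdFinEquiv.trans (finCongr (pow_succ 2 n).symm))
                   (finProdFinEquiv.trans (finCongr (pow_succ 2 n).symm))
      (Matrix.kroneckerMap (· * ·) (polarG n) (Matrix.of ![![1, 0], ![1, 1]]))

/-- the distribution of `A^N = X^N G_N` for an i.i.d. source `X` -/
def polarA (pX : ZMod 2 → ℝ) (n : ℕ) : (Fin (2 ^ n) → ZMod 2) → ℝ :=
  push (iid pX (2 ^ n)) (fun x => Matrix.vecMul x (polarG n))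

/-- conditional entropy `H(A_i | A^{i-1})` of the polarized source -/
def polarCondH (pX : ZMod 2 → ℝ) (n : ℕ) (i : Fin (2 ^ n)) : ℝ :=
  Hsh (push (polarA pX n) (fun a => fun j : Fin ((i : ℕ) + 1) => a (Fin.castLE i.isLt j)))
    - Hsh (push (polarA pX n) (fun a => fun j : Fin (i : ℕ) => a (Fin.castLE i.isLt.le j)))

/-- `δ_N = 2^{-N^β}` -/
def polarδ (n : ℕ) (β : ℝ) : ℝ := (2:ℝ) ^ (-(((2:ℝ) ^ n) ^ β))

/-- the very-high-entropy set `V_X` -/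
def polarV (pX : ZMod 2 → ℝ) (β : ℝ) (n : ℕ) : Finset (Fin (2 ^ n)) :=
  Finset.univ.filter fun i => 1 - polarδ n β < polarCondH pX n i

/-- the high-entropy set `H_X` -/
def polarH (pX : ZMod 2 → ℝ) (β : ℝ) (n : ℕ) : Finset (Fin (2 ^ n)) :=
  Finset.univ.filter fun i => polarδ n β < polarCondH pX n i


/-
By the chain rule, `H(A[V])` is the sum over `i ∈ V` of `H(A_i | A_j, j ∈ V, j < i)`. Conditioning
on the whole past `A^{i-1}` instead can only lower each term, so `H(A[V])` is at least the sum of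
the `H(A_i | A^{i-1})`, each of which falls short of the maximum `log |α|` by at most `δ`.
-/

section Push

variable {α β γ : Type*} [Fintype α] [Fintype β] [Fintype γ] {p : α → ℝ}

theorem push_nonneg (hp : ∀ a, 0 ≤ p a) (f : α → β) (b : β) : 0 ≤ push p f b :=
  sum_nonneg fun a _ => ite_nonneg (hp a) le_rfl

theorem le_push_apply (hp : ∀ a, 0 ≤ p a) (f : α → β) (a : α) : p a ≤ push p f (f a) := by
  simpa only [push, if_true] using single_le_sum (f := fun x => if f x = f a then p x else 0)
    (fun x _ => ite_nonneg (hp x) le_rfl) (mem_univ a)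

theorem push_apply_ne_zero (hp : ∀ a, 0 ≤ p a) (f : α → β) {a : α} (ha : p a ≠ 0) :
    push p f (f a) ≠ 0 :=
  (((hp a).lt_of_ne' ha).trans_le (le_push_apply hp f a)).ne'

theorem exists_ne_zero_of_push_ne_zero {f : α → β} {b : β} (hb : push p f b ≠ 0) :
    ∃ a, p a ≠ 0 ∧ f a = b := by
  obtain ⟨a, -, ha⟩ := exists_ne_zero_of_sum_ne_zero hb
  exact ⟨a, (ite_ne_right_iff.1 ha).2, (ite_ne_right_iff.1 ha).1⟩

theorem sum_push_mul (p : α → ℝ) (f : α → β) (φ : β → ℝ) :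
    ∑ b, push p f b * φ b = ∑ a, p a * φ (f a) := by
  simp only [push, sum_mul, ite_mul, zero_mul]
  rw [sum_comm]
  simp only [sum_ite_eq, mem_univ, if_true]

theorem sum_push (p : α → ℝ) (f : α → β) : ∑ b, push p f b = ∑ a, p a := by
  simpa only [mul_one] using sum_push_mul p f fun _ => 1

theorem isPMF_push (hp : IsPMF p) (f : α → β) : IsPMF (push p f) :=
  ⟨push_nonneg hp.1 f, (sum_push p f).trans hp.2⟩

theorem sum_push_prodMk (p : α → ℝ) (f : α → β) (u : α → γ) (b : β) :
    ∑ c, push p (fun a => (f a, u a)) (b, c) = push p f b := by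
  simp only [push, Prod.mk.injEq, ite_and]
  rw [sum_comm]
  refine sum_congr rfl fun a _ => ?_
  by_cases h : f a = b <;> simp [h]

theorem push_apply_congr (p : α → ℝ) {f : α → β} {g : α → γ}
    (h : ∀ a b, f a = f b ↔ g a = g b) (a : α) : push p f (f a) = push p g (g a) := by
  simp only [push, h]

theorem isPMF_iid (hp : IsPMF p) (n : ℕ) : IsPMF (iid p n) :=
  ⟨fun _ => prod_nonneg fun _ _ => hp.1 _, by
    simp only [iid, ← Fintype.sum_pow, hp.2, one_pow]⟩

end Push

section Entropy

variable {α β γ δ : Type*} [Fintype α] [Fintype β] [Fintype γ] [Fintype δ] {p q : α → ℝ}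

theorem KL_eq_neg_sum_sub_Hsh (hpq : ∀ a, p a ≠ 0 → q a ≠ 0) :
    KL p q = -∑ a, p a * logb 2 (q a) - Hsh p := by
  have logb_ratio (a : α) :
      p a * logb 2 (p a / q a) = p a * logb 2 (p a) - p a * logb 2 (q a) := by
    rcases eq_or_ne (p a) 0 with ha | ha
    · simp [ha]
    · rw [logb_div ha (hpq a ha), mul_sub]
  simp only [KL, Hsh, logb_ratio, sum_sub_distrib]
  ring

theorem KL_uniform (hp : IsPMF p) :
    KL p (fun _ => 1 / (Fintype.card α : ℝ)) = logb 2 (Fintype.card α) - Hsh p := by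
  have uniform_ne_zero (a : α) : (1 / Fintype.card α : ℝ) ≠ 0 :=
    have : Nonempty α := ⟨a⟩
    one_div_ne_zero (Nat.cast_ne_zero.2 Fintype.card_ne_zero)
  rw [KL_eq_neg_sum_sub_Hsh fun a _ => uniform_ne_zero a, ← sum_mul, hp.2, one_mul, one_div,
    logb_inv, neg_neg]

theorem sub_le_mul_log_div {x y : ℝ} (hx : 0 ≤ x) (hy : 0 ≤ y) (hxy : x ≠ 0 → y ≠ 0) :
    x - y ≤ x * log (x / y) := by
  rcases hx.eq_or_lt with rfl | hx
  · simpa using hy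
  have hy : 0 < y := hy.lt_of_ne' (hxy hx.ne')
  calc x - y = x * (1 - (x / y)⁻¹) := by field_simp
    _ ≤ x * log (x / y) :=
      mul_le_mul_of_nonneg_left (one_sub_inv_le_log_of_pos (div_pos hx hy)) hx.le

theorem KL_nonneg (hp : ∀ a, 0 ≤ p a) (hq : ∀ a, 0 ≤ q a) (hpq : ∀ a, p a ≠ 0 → q a ≠ 0)
    (hsum : ∑ a, q a ≤ ∑ a, p a) : 0 ≤ KL p q := by
  have natural_log_nonneg : 0 ≤ ∑ a, p a * log (p a / q a) :=
    calc 0 ≤ ∑ a, (p a - q a) := by rw [sum_sub_distrib]; exact sub_nonneg.2 hsum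
      _ ≤ _ := sum_le_sum fun a _ => sub_le_mul_log_div (hp a) (hq a) (hpq a)
  simp only [KL, logb, ← mul_div_assoc, ← sum_div]
  exact div_nonneg natural_log_nonneg (log_nonneg one_le_two)

theorem Hsh_push (p : α → ℝ) (f : α → β) :
    Hsh (push p f) = -∑ a, p a * logb 2 (push p f (f a)) :=
  congrArg Neg.neg (sum_push_mul p f fun b => logb 2 (push p f b))

theorem Hsh_push_congr (p : α → ℝ) {f : α → β} {g : α → γ}
    (h : ∀ a b, f a = f b ↔ g a = g b) : Hsh (push p f) = Hsh (push p g) := by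
  simp only [Hsh_push, push_apply_congr p h]

theorem Hsh_push_of_subsingleton [Subsingleton β] (hp : IsPMF p) (f : α → β) :
    Hsh (push p f) = 0 := by
  have push_eq_one (a : α) : push p f (f a) = 1 := by
    simpa only [push, eq_iff_true_of_subsingleton, if_true] using hp.2
  simp only [Hsh_push, push_eq_one, logb_one, mul_zero, sum_const_zero, neg_zero]

/-- The conditional entropy `H(u | f)`, base 2, of two functions `u`, `f` of a random element with
pmf `p`, defined as `H(f, u) - H(f)`. -/
def condHsh (p : α → ℝ) (u : α → γ) (f : α → β) : ℝ :=
  Hsh (push p fun a => (f a, u a)) - Hsh (push p f)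

theorem condHsh_le_neg_sum_mul_logb (hp : ∀ a, 0 ≤ p a) (u : α → γ) (f : α → β)
    {κ : β → γ → ℝ} (κ_nonneg : ∀ b c, 0 ≤ κ b c) (κ_sum_le_one : ∀ b, ∑ c, κ b c ≤ 1)
    (κ_ne_zero : ∀ a, p a ≠ 0 → κ (f a) (u a) ≠ 0) :
    condHsh p u f ≤ -∑ a, p a * logb 2 (κ (f a) (u a)) := by
  let q : β × γ → ℝ := fun x => push p f x.1 * κ x.1 x.2
  have q_nonneg (x) : 0 ≤ q x := mul_nonneg (push_nonneg hp f _) (κ_nonneg _ _)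
  have q_sum_le : ∑ x, q x ≤ ∑ x, push p (fun a => (f a, u a)) x := by
    rw [sum_push, ← sum_push p f, Fintype.sum_prod_type]
    simp only [q, ← mul_sum]
    exact sum_le_sum fun b _ => mul_le_of_le_one_right (push_nonneg hp f b) (κ_sum_le_one b)
  have q_ne_zero (x) (hx : push p (fun a => (f a, u a)) x ≠ 0) : q x ≠ 0 := by
    obtain ⟨a, ha, rfl⟩ := exists_ne_zero_of_push_ne_zero hx
    exact mul_ne_zero (push_apply_ne_zero hp f ha) (κ_ne_zero a ha)
  have logb_q (a) : p a * logb 2 (q (f a, u a)) =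
      p a * logb 2 (push p f (f a)) + p a * logb 2 (κ (f a) (u a)) := by
    by_cases ha : p a = 0
    · simp only [ha, zero_mul, add_zero]
    · rw [logb_mul (push_apply_ne_zero hp f ha) (κ_ne_zero a ha), mul_add]
  have gibbs := KL_nonneg (push_nonneg hp _) q_nonneg q_ne_zero q_sum_le
  rw [KL_eq_neg_sum_sub_Hsh q_ne_zero, sum_push_mul] at gibbs
  simp only [logb_q, sum_add_distrib] at gibbs
  rw [condHsh, Hsh_push p f]
  linarith

/-- The conditional law `P(u = c | f = b)` of a random element with pmf `p`; it is identically zero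
in `c` when `f = b` has probability zero. -/
def condLaw (p : α → ℝ) (u : α → γ) (f : α → β) (b : β) (c : γ) : ℝ :=
  push p (fun a => (f a, u a)) (b, c) / push p f b

theorem condLaw_nonneg (hp : ∀ a, 0 ≤ p a) (u : α → γ) (f : α → β) (b : β) (c : γ) :
    0 ≤ condLaw p u f b c :=
  div_nonneg (push_nonneg hp _ _) (push_nonneg hp _ _)

theorem sum_condLaw_le_one (p : α → ℝ) (u : α → γ) (f : α → β) (b : β) :
    ∑ c, condLaw p u f b c ≤ 1 := by
  simp only [condLaw, ← sum_div, sum_push_prodMk]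
  exact div_self_le_one _

theorem condLaw_apply_ne_zero (hp : ∀ a, 0 ≤ p a) (u : α → γ) (f : α → β) {a : α}
    (ha : p a ≠ 0) : condLaw p u f (f a) (u a) ≠ 0 :=
  div_ne_zero (push_apply_ne_zero hp (fun a => (f a, u a)) ha) (push_apply_ne_zero hp f ha)

theorem condHsh_eq_neg_sum_mul_logb_condLaw (hp : ∀ a, 0 ≤ p a) (u : α → γ) (f : α → β) :
    condHsh p u f = -∑ a, p a * logb 2 (condLaw p u f (f a) (u a)) := by
  have logb_condLaw (a) : p a * logb 2 (condLaw p u f (f a) (u a)) =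
      p a * logb 2 (push p (fun a => (f a, u a)) (f a, u a)) - p a * logb 2 (push p f (f a)) := by
    by_cases ha : p a = 0
    · simp only [ha, zero_mul, sub_zero]
    · rw [condLaw, logb_div (push_apply_ne_zero hp (fun a => (f a, u a)) ha)
        (push_apply_ne_zero hp f ha), mul_sub]
  simp only [condHsh, Hsh_push, logb_condLaw, sum_sub_distrib]
  ring

theorem condHsh_le_condHsh_comp (hp : ∀ a, 0 ≤ p a) (u : α → δ) (f : α → β) (t : β → γ) :
    condHsh p u f ≤ condHsh p u (t ∘ f) :=
  (condHsh_le_neg_sum_mul_logb hp u f (fun b => condLaw_nonneg hp u (t ∘ f) (t b))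
    (fun b => sum_condLaw_le_one p u (t ∘ f) (t b))
    fun _ => condLaw_apply_ne_zero hp u (t ∘ f)).trans_eq
    (condHsh_eq_neg_sum_mul_logb_condLaw hp u (t ∘ f)).symm

end Entropy

section RandomVector

variable {ι : Type*} [Fintype ι]

theorem condHsh_eval_restrict {E : ι → Type*} [∀ i, Fintype (E i)] [DecidableEq ι]
    (p : (∀ i, E i) → ℝ) (i : ι) (S : Finset ι) :
    condHsh p (fun a => a i) S.restrict =
      Hsh (push p (insert i S).restrict) - Hsh (push p S.restrict) := by
  refine congrArg (· - _) (Hsh_push_congr p fun a b => ?_)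
  simp only [Prod.mk.injEq, funext_iff, Subtype.forall, restrict_def, forall_mem_insert, and_comm]

theorem sum_condHsh_Iio_le_Hsh_push_restrict {E : ι → Type*} [∀ i, Fintype (E i)]
    [LinearOrder ι] [LocallyFiniteOrderBot ι] [DecidableEq ι] {p : (∀ i, E i) → ℝ} (hp : IsPMF p)
    (V : Finset ι) :
    ∑ i ∈ V, condHsh p (fun a => a i) (Iio i).restrict ≤ Hsh (push p V.restrict) := by
  induction V using Finset.induction_on_max with
  | empty => rw [sum_empty, Hsh_push_of_subsingleton hp]
  | insert i V hV ih =>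
    have V_subset : V ⊆ Iio i := fun j hj => mem_Iio.2 (hV j hj)
    have condition_on_past :=
      condHsh_le_condHsh_comp hp.1 (fun a => a i) (Iio i).restrict (restrict₂ V_subset)
    rw [restrict₂_comp_restrict, condHsh_eval_restrict p i V] at condition_on_past
    rw [sum_insert fun hi => (hV i hi).false]
    linarith

theorem statement11_general {α : Type*} [Fintype α] [LinearOrder ι] [LocallyFiniteOrderBot ι]
    [DecidableEq ι] {p : (ι → α) → ℝ} (hp : IsPMF p) {δ : ℝ} (hδ : 0 ≤ δ) {V : Finset ι}
    (hV : ∀ i ∈ V, logb 2 (Fintype.card α) - δ ≤ condHsh p (fun a => a i) (Iio i).restrict) :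
    V.card * logb 2 (Fintype.card α) - Hsh (push p V.restrict) ≤ Fintype.card ι * δ ∧
      KL (push p V.restrict) (fun _ => 1 / (Fintype.card α : ℝ) ^ V.card) ≤
        Fintype.card ι * δ := by
  have entropy_gap :
      V.card * logb 2 (Fintype.card α) - Hsh (push p V.restrict) ≤ Fintype.card ι * δ := by
    have entropy_ge : V.card * (logb 2 (Fintype.card α) - δ) ≤ Hsh (push p V.restrict) :=
      calc _ ≤ ∑ i ∈ V, condHsh p (fun a => a i) (Iio i).restrict := by
            simpa only [nsmul_eq_mul] using card_nsmul_le_sum V _ _ hV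
        _ ≤ _ := sum_condHsh_Iio_le_Hsh_push_restrict hp V
    have card_mul_le : V.card * δ ≤ Fintype.card ι * δ :=
      mul_le_mul_of_nonneg_right (Nat.cast_le.2 V.card_le_univ) hδ
    linarith
  have KL_eq := KL_uniform (isPMF_push hp V.restrict)
  simp only [Fintype.card_fun, Fintype.card_coe, Nat.cast_pow, logb_pow] at KL_eq
  exact ⟨entropy_gap, KL_eq.trans_le entropy_gap⟩

end RandomVector

theorem Hsh_push_castLE {α : Type*} [Fintype α] {N k : ℕ} (p : (Fin N → α) → ℝ) (hk : k ≤ N)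
    {S : Finset (Fin N)} (hS : ∀ j, j ∈ S ↔ (j : ℕ) < k) :
    Hsh (push p fun a => fun j : Fin k => a (Fin.castLE hk j)) = Hsh (push p S.restrict) := by
  refine Hsh_push_congr p fun a b => ?_
  simp only [funext_iff, Subtype.forall, restrict_def, hS]
  exact ⟨fun h j hj => h ⟨j, hj⟩, fun h j => h _ j.isLt⟩

theorem polarCondH_eq_condHsh (pX : ZMod 2 → ℝ) (n : ℕ) (i : Fin (2 ^ n)) :
    polarCondH pX n i = condHsh (polarA pX n) (fun a => a i) (Iio i).restrict := by
  rw [condHsh_eval_restrict, Iio_insert, polarCondH,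
    Hsh_push_castLE (S := Iic i) _ _ fun _ => mem_Iic.trans Nat.lt_succ_iff.symm,
    Hsh_push_castLE (S := Iio i) _ _ fun _ => mem_Iio]

theorem le_condHsh_of_mem_polarV {pX : ZMod 2 → ℝ} {β : ℝ} {n : ℕ} {i : Fin (2 ^ n)}
    (hi : i ∈ polarV pX β n) :
    1 - polarδ n β ≤ condHsh (polarA pX n) (fun a => a i) (Iio i).restrict :=
  polarCondH_eq_condHsh pX n i ▸ (mem_filter.1 hi).2.le

theorem polarδ_nonneg (n : ℕ) (β : ℝ) : 0 ≤ polarδ n β :=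
  rpow_nonneg zero_le_two _

theorem isPMF_polarA {pX : ZMod 2 → ℝ} (hX : IsPMF pX) (n : ℕ) : IsPMF (polarA pX n) :=
  isPMF_push (isPMF_iid hX _) _

/-- Lemma 7: near-uniformity of the polarized bits `A^N[V_X]`. -/
theorem statement11 (pX : ZMod 2 → ℝ) (hX : IsPMF pX)
    (β : ℝ) (hβ0 : 0 < β) (hβ : β < 1 / 2) (n : ℕ) :
    -- `log 2^{|V_X|} − H(A^N[V_X]) ≤ N δ_N`
    ((polarV pX β n).card : ℝ)
        - Hsh (push (polarA pX n)
            (fun a => fun i : (polarV pX β n) => a i.1))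
      ≤ (2 ^ n : ℕ) * polarδ n β ∧
    -- equivalently, the KL divergence from the uniform distribution is at most `N δ_N`
    KL (push (polarA pX n) (fun a => fun i : (polarV pX β n) => a i.1))
       (fun _ => 1 / (2:ℝ) ^ (polarV pX β n).card)
      ≤ (2 ^ n : ℕ) * polarδ n β := by
  simpa [restrict_def] using statement11_general (isPMF_polarA hX n) (polarδ_nonneg n β)
    fun _ hi => by simpa using le_condHsh_of_mem_polarV hi
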